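/- Let A, B be positive definite n×n complex matrices with B ≤ A in the Loewner order. Then for all a, b ∈ (0,1] and all t ∈ [0,1], in the Loewner order, T_{(1−t)a + tb}(A|B) ≥ (1−t)·T_a(A|B) + t·T_b(A|B). -/

import Mathlib

open Matrix ComplexOrder

/-- Real power of a (Hermitian) matrix via the continuous functional calculus. -/
noncomputable def mrpow {n : ℕ} (A : Matrix (Fin n) (Fin n) ℂ) (t : ℝ) :
    Matrix (Fin n) (Fin n) ℂ :=
  cfc (fun x : ℝ => x ^ t) A

/-- The weighted geometric mean `A ♯_t B = A^{1/2} (A^{-1/2} B A^{-1/2})^t A^{1/2}`. -/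
noncomputable def geomMean {n : ℕ} (A B : Matrix (Fin n) (Fin n) ℂ) (t : ℝ) :
    Matrix (Fin n) (Fin n) ℂ :=
  mrpow A (1 / 2) * mrpow (mrpow A (-(1 / 2)) * B * mrpow A (-(1 / 2))) t * mrpow A (1 / 2)

/-- The Tsallis relative operator entropy `T_s(A|B) = (A ♯_s B - A)/s`. -/
noncomputable def tsallis {n : ℕ} (A B : Matrix (Fin n) (Fin n) ℂ) (s : ℝ) :
    Matrix (Fin n) (Fin n) ℂ :=
  s⁻¹ • (geomMean A B s - A)


open scoped MatrixOrder in
lemma aux_spec {n : ℕ} (X : Matrix (Fin n) (Fin n) ℂ) (hX : X.PosDef)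
    (h1 : (1 - X).PosSemidef) (x : ℝ) (hx : x ∈ spectrum ℝ X) : 0 < x ∧ x ≤ 1 := by
  have hpos : ∀ y ∈ spectrum ℝ X, 0 < y := by
    intro y hy
    have h0 : 0 ≤ y := spectrum_nonneg_of_nonneg hX.posSemidef.nonneg hy
    rcases h0.lt_or_eq with h | h
    · exact h
    · subst h
      exact absurd hX.isUnit (spectrum.zero_mem_iff ℝ |>.1 hy)
  refine ⟨hpos x hx, ?_⟩
  have h2 : (1 - x) ∈ spectrum ℝ (1 - X) := by
    have := spectrum.sub_singleton_eq X (1 : ℝ)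
    have h3 := spectrum.singleton_sub_eq X (1 : ℝ)
    rw [map_one] at h3
    rw [← h3]
    exact Set.sub_mem_sub rfl hx
  have := spectrum_nonneg_of_nonneg h1.nonneg h2
  linarith

lemma aux_int (c : ℝ) (hc : c ≠ 0) : ∫ u in (0:ℝ)..1, Real.exp (c * u) = (Real.exp c - 1) / c := by
  rw [intervalIntegral.integral_comp_mul_left (fun x => Real.exp x) hc]
  simp [div_eq_inv_mul]

lemma aux_scalar (x a b t : ℝ) (hx : 0 < x) (hx1 : x ≤ 1) (ha : 0 < a) (hb : 0 < b)
    (ht : t ∈ Set.Icc (0 : ℝ) 1) :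
    0 ≤ ((1 - t) * a + t * b)⁻¹ * (x ^ ((1 - t) * a + t * b) - 1)
      - ((1 - t) * (a⁻¹ * (x ^ a - 1)) + t * (b⁻¹ * (x ^ b - 1))) := by
  obtain ⟨ht0, ht1⟩ := ht
  have hs : 0 < (1 - t) * a + t * b := by
    rcases ht0.lt_or_eq with h | h
    · have := mul_pos h hb
      have := mul_nonneg (sub_nonneg.2 ht1) ha.le
      linarith
    · subst h; simpa using ha
  rcases hx1.lt_or_eq with h1 | h1
  swap
  · subst h1; simp
  have hL : Real.log x < 0 := Real.log_neg hx h1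
  set L := Real.log x with hLdef
  have key : ∀ s : ℝ, 0 < s → s⁻¹ * (x ^ s - 1) = L * ∫ u in (0:ℝ)..1, Real.exp ((L * s) * u) := by
    intro s hs
    rw [aux_int _ (mul_ne_zero hL.ne hs.ne'), Real.rpow_def_of_pos hx, ← hLdef]
    have := hL.ne
    field_simp
  rw [key _ hs, key _ ha, key _ hb]
  have hint : ∀ c : ℝ, IntervalIntegrable (fun u => Real.exp (c * u)) MeasureTheory.volume 0 1 :=
    fun c => (by fun_prop : Continuous fun u => Real.exp (c * u)).intervalIntegrable _ _
  have hle : ∫ u in (0:ℝ)..1, Real.exp ((L * ((1 - t) * a + t * b)) * u) ≤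
      (1 - t) * (∫ u in (0:ℝ)..1, Real.exp ((L * a) * u))
        + t * ∫ u in (0:ℝ)..1, Real.exp ((L * b) * u) := by
    rw [← intervalIntegral.integral_const_mul, ← intervalIntegral.integral_const_mul,
      ← intervalIntegral.integral_add ((hint _).const_mul _) ((hint _).const_mul _)]
    refine intervalIntegral.integral_mono_on zero_le_one (hint _)
      (((hint _).const_mul _).add ((hint _).const_mul _)) ?_
    intro u _
    have := convexOn_exp.2 (Set.mem_univ (L * a * u)) (Set.mem_univ (L * b * u))
      (sub_nonneg.2 ht1) ht0 (by ring)
    simp only [smul_eq_mul] at this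
    have e2 : L * ((1 - t) * a + t * b) * u = (1 - t) * (L * a * u) + t * (L * b * u) := by ring
    rw [e2]
    exact this
  have := mul_le_mul_of_nonpos_left hle hL.le
  linarith

open scoped MatrixOrder in
lemma aux_mat {n : ℕ} (X : Matrix (Fin n) (Fin n) ℂ) (hX : X.PosDef)
    (h1 : (1 - X).PosSemidef) (a b t : ℝ) (ha : 0 < a) (hb : 0 < b)
    (ht : t ∈ Set.Icc (0 : ℝ) 1) :
    (((1 - t) * a + t * b)⁻¹ • (mrpow X ((1 - t) * a + t * b) - 1) -
      ((1 - t) • (a⁻¹ • (mrpow X a - 1)) + t • (b⁻¹ • (mrpow X b - 1)))).PosSemidef := by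
  have hsa : IsSelfAdjoint X := hX.isHermitian
  have hc : ∀ f : ℝ → ℝ, ContinuousOn f (spectrum ℝ X) := fun f =>
    (Matrix.finite_real_spectrum (A := X)).continuousOn f
  have e : ∀ s : ℝ, s⁻¹ • (mrpow X s - 1) = cfc (fun x : ℝ => s⁻¹ * (x ^ s - 1)) X := by
    intro s
    rw [cfc_const_mul _ _ _ (hc _), cfc_sub _ _ _ (hc _) (hc _), cfc_const_one ℝ X]
    rfl
  rw [e, e, e, ← cfc_smul _ _ _ (hc _), ← cfc_smul _ _ _ (hc _), ← cfc_add _ _ _ (hc _) (hc _),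
    ← cfc_sub _ _ _ (hc _) (hc _)]
  rw [← Matrix.nonneg_iff_posSemidef]
  refine cfc_nonneg fun x hx => ?_
  obtain ⟨h0, h2⟩ := aux_spec X hX h1 x hx
  simpa using aux_scalar x a b t h0 h2 ha hb ht

lemma aux_pow {n : ℕ} (A : Matrix (Fin n) (Fin n) ℂ) (hA : A.PosDef) :
    mrpow A (1/2) * mrpow A (1/2) = A ∧ mrpow A (-(1/2)) * mrpow A (1/2) = 1 ∧
    mrpow A (1/2) * mrpow A (-(1/2)) = 1 ∧ (∀ s, (mrpow A s)ᴴ = mrpow A s) := by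
  have hsa : IsSelfAdjoint A := hA.isHermitian
  have hc : ∀ f : ℝ → ℝ, ContinuousOn f (spectrum ℝ A) := fun f =>
    (Matrix.finite_real_spectrum (A := A)).continuousOn f
  have hpos : ∀ y ∈ spectrum ℝ A, 0 < y := by
    open scoped MatrixOrder in
    intro y hy
    have h0 : 0 ≤ y := spectrum_nonneg_of_nonneg hA.posSemidef.nonneg hy
    rcases h0.lt_or_eq with h | h
    · exact h
    · subst h
      exact absurd hA.isUnit (spectrum.zero_mem_iff ℝ |>.1 hy)
  have m : ∀ p q : ℝ, mrpow A p * mrpow A q = mrpow A (p + q) := by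
    intro p q
    unfold mrpow
    rw [← cfc_mul _ _ _ (hc _) (hc _)]
    exact cfc_congr fun x hx => (Real.rpow_add (hpos x hx) p q).symm
  have m0 : mrpow A 0 = 1 := by
    unfold mrpow
    simp only [Real.rpow_zero]
    exact cfc_const_one ℝ A
  have m1 : mrpow A 1 = A := by
    unfold mrpow
    simp only [Real.rpow_one]
    exact cfc_id' ℝ A
  refine ⟨?_, ?_, ?_, fun s => ?_⟩
  · rw [m]; norm_num [m1]
  · rw [m]; norm_num [m0]
  · rw [m]; norm_num [m0]
  · exact cfc_predicate (fun x : ℝ => x ^ s) A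

/-- For positive definite `B ≤ A`, `a, b ∈ (0,1]` and `t ∈ [0,1]`,
in the Loewner order: `T_{(1-t)a+tb}(A|B) ≥ (1-t)T_a(A|B) + tT_b(A|B)`. -/
theorem stmt16 (n : ℕ) (A B : Matrix (Fin n) (Fin n) ℂ) (hA : A.PosDef) (hB : B.PosDef)
    (hBA : (A - B).PosSemidef)
    (a b : ℝ) (ha : a ∈ Set.Ioc (0 : ℝ) 1) (hb : b ∈ Set.Ioc (0 : ℝ) 1)
    (t : ℝ) (ht : t ∈ Set.Icc (0 : ℝ) 1) :
    (tsallis A B ((1 - t) * a + t * b) -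
      ((1 - t) • tsallis A B a + t • tsallis A B b)).PosSemidef := by
  obtain ⟨hAA, hl, hr, hH⟩ := aux_pow A hA
  set P := mrpow A (1/2) with hP
  set Q := mrpow A (-(1/2)) with hQ
  have hQu : IsUnit Q := IsUnit.of_mul_eq_one P hl
  have hXd : (Q * B * Q).PosDef := by
    have := (Matrix.IsUnit.posDef_star_left_conjugate_iff hQu).2 hB
    rwa [Matrix.star_eq_conjTranspose, hH] at this
  have hQA : Q * A * Q = 1 := by
    rw [← hAA, ← mul_assoc, hl, one_mul, hr]
  have h1 : (1 - Q * B * Q).PosSemidef := by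
    have := hBA.conjTranspose_mul_mul_same Q
    rwa [hH, mul_sub, sub_mul, hQA] at this
  have e : ∀ s, tsallis A B s = P * (s⁻¹ • (mrpow (Q * B * Q) s - 1)) * P := by
    intro s
    unfold tsallis geomMean
    rw [← hP, ← hQ, mul_smul_comm, smul_mul_assoc, mul_sub, sub_mul, mul_one, hAA]
  have := (aux_mat _ hXd h1 a b t ha.1 hb.1 ht).conjTranspose_mul_mul_same P
  rw [hH, ← hP] at this
  rw [e, e, e]
  convert this using 1
  simp only [mul_sub, sub_mul, mul_add, add_mul, mul_smul_comm, smul_mul_assoc]
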